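/- Let A generate a bounded C₀-semigroup on a Hilbert space H, with iℝ contained in the resolvent set of A, and suppose there is C > 0 such that ‖(A − iμ)⁻¹‖ ≤ C e^{C|μ|} for all real μ with |μ| large. Then for every k ∈ ℕ there exists C_k > 0 such that ‖e^{tA}(A)⁻ᵏ‖ ≤ C_k / (log(2+t))ᵏ for all t > 0; equivalently, for initial data u₀ ∈ D(Aᵏ), ‖e^{tA}u₀‖² ≤ C_k (log(2+t))^{−2k} ‖u₀‖²_{D(Aᵏ)}. -/

import Mathlib

/-!
The generator `A` is invertible, so everything reduces to bounding `T(t) A⁻ᵏ`, and, because `A⁻¹`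
commutes with the semigroup, to the case `k = 1`: `‖T(t) A⁻¹‖ ≤ K / log (2 + t)`
(`BurqDecay.IsResolventFamily.exists_log_decay`).

For `k = 1`, split the orbit of `x ∈ D(A)` at a frequency of size `a`. Let `ψ` be a smooth cutoff
supported in `[-1, 1]` with `ψ(0) = 1`, so that `ψ̂` is an integrable kernel of mass one. Averaging
the orbit around time `t` against `ψ̂` at scale `1 / a` changes `T(t) x` by at most
`O((‖x‖ + ‖Ax‖) / a)`, since orbits in the domain are Lipschitz. The average itself is computed by
moving the Fourier transform onto the orbit, truncated to the window `(0, 2t]`: as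
`e^{-iμs} T(s) x` is the derivative of `e^{-iμs} T(s) (A - iμ)⁻¹ x`, its integral consists of two
boundary terms (`BurqDecay.IsBddSemigroup.fourier_orbit`). Hence the average is expressed through
`∫ ψ(v) e^{∓2πivat} (A - 2πiav)⁻¹ x dv`, which involves the resolvent only on the imaginary axis
(`BurqDecay.IsResolventFamily.integral_fourier_smul_orbit`). One integration by parts in `v` and the
exponential resolvent bound make this `O(e^{4πCa} / t)`. Taking `a` to be one plus a small
multiple of `log (2 + t)` balances the two errors.

The domain `D` is not assumed to be the full domain of the generator; that it is so follows from
boundedness of the semigroup (`BurqDecay.IsResolventFamily.eq_of_hasDeriv`), and this is what makes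
`A⁻¹` commute with `T(t)`.
-/

open scoped InnerProductSpace

namespace BurqDecay

open MeasureTheory Set Filter Topology
open scoped FourierTransform ContDiff SchwartzMap

/-! ### Bounded semigroups and their orbits -/

variable {H : Type*} [NormedAddCommGroup H] [NormedSpace ℂ H]

/-- `T` is a strongly continuous semigroup on `[0, ∞)`, bounded by `M`. Only the values `T t` with
`t ≥ 0` carry information. A pair `(z, w)` in the graph of the generator is encoded throughout by
the statement that `t ↦ T t z` has right derivative `w` at `0`. -/
structure IsBddSemigroup (T : ℝ → H →L[ℂ] H) (M : ℝ) : Prop where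
  zero : T 0 = 1
  add : ∀ s t : ℝ, 0 ≤ s → 0 ≤ t → T (s + t) = (T s).comp (T t)
  bdd : ∀ t : ℝ, 0 ≤ t → ‖T t‖ ≤ M
  cont : ∀ x : H, ContinuousOn (fun t => T t x) (Ici 0)

namespace IsBddSemigroup

variable {T : ℝ → H →L[ℂ] H} {M : ℝ}

lemma nonneg (hT : IsBddSemigroup T M) : 0 ≤ M := (norm_nonneg _).trans (hT.bdd 0 le_rfl)

lemma norm_apply_le (hT : IsBddSemigroup T M) {t : ℝ} (ht : 0 ≤ t) (x : H) :
    ‖T t x‖ ≤ M * ‖x‖ :=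
  ((T t).le_opNorm x).trans (mul_le_mul_of_nonneg_right (hT.bdd t ht) (norm_nonneg _))

lemma hasDerivWithinAt_orbit (hT : IsBddSemigroup T M) {z w : H}
    (h : HasDerivWithinAt (fun t => T t z) w (Ici 0) 0) {s : ℝ} (hs : 0 ≤ s) :
    HasDerivWithinAt (fun t => T t z) (T s w) (Ici s) s := by
  have h1 : HasDerivWithinAt (fun t => T (t - s) z) w (Ici s) s := by
    have h' : HasDerivWithinAt (fun t => T t z) w (Ici 0)
        ((fun t : ℝ => t - s) s) := by simpa using h
    have hin : HasDerivWithinAt (fun t : ℝ => t - s) 1 (Ici s) s :=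
      ((hasDerivAt_id s).sub_const s).hasDerivWithinAt
    have := HasDerivWithinAt.scomp (h := fun t : ℝ => t - s) s h' hin (fun t ht => by simpa using ht)
    simpa [Function.comp_def] using this
  have h2 := ((T s).restrictScalars ℝ).hasFDerivAt.comp_hasDerivWithinAt s h1
  refine (h2.congr ?_ ?_)
  · intro t ht
    have := hT.add s (t - s) hs (sub_nonneg.2 ht)
    simp only [add_sub_cancel] at this
    simp [this]
  · simp [hT.zero]

/-- If `w = Az`, then `t ↦ e^{ct} T(t) z` has right derivative `e^{cs} T(s) (A + c) z` at `s`. -/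
lemma hasDerivWithinAt_exp_smul_orbit (hT : IsBddSemigroup T M) {z w : H}
    (h : HasDerivWithinAt (fun t => T t z) w (Ici 0) 0) (c : ℂ) {s : ℝ} (hs : 0 ≤ s) :
    HasDerivWithinAt (fun t : ℝ => Complex.exp (c * t) • T t z)
      (Complex.exp (c * s) • T s (w + c • z)) (Ici s) s := by
  have h1 : HasDerivAt (fun t : ℝ => Complex.exp (c * t)) (Complex.exp (c * s) * c) s := by
    have : HasDerivAt (fun t : ℝ => c * (t : ℂ)) c s := by
      simpa using (Complex.ofRealCLM.hasDerivAt (x := s)).const_mul c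
    exact this.cexp
  convert h1.hasDerivWithinAt.smul (hT.hasDerivWithinAt_orbit h hs) using 1
  · funext t; rfl
  · simp only [map_add, map_smul, smul_add, smul_smul]

/-- Orbits of vectors in the domain of the generator are Lipschitz. -/
lemma norm_sub_le (hT : IsBddSemigroup T M) {z w : H}
    (h : HasDerivWithinAt (fun t => T t z) w (Ici 0) 0) {s t : ℝ} (hs : 0 ≤ s) (ht : 0 ≤ t) :
    ‖T t z - T s z‖ ≤ M * ‖w‖ * |t - s| := by
  wlog hst : s ≤ t generalizing s t
  · rw [norm_sub_rev, abs_sub_comm]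
    exact this ht hs (le_of_not_ge hst)
  rw [abs_of_nonneg (sub_nonneg.2 hst)]
  refine norm_image_sub_le_of_norm_deriv_right_le_segment (f := fun t => T t z)
    (f' := fun t => T t w) (a := s) (b := t) ?_ ?_ ?_ t ⟨hst, le_rfl⟩
  · exact (hT.cont z).mono fun r hr => hs.trans hr.1
  · exact fun r hr => hT.hasDerivWithinAt_orbit h (hs.trans hr.1)
  · exact fun r hr => hT.norm_apply_le (hs.trans hr.1) w

/-- The generator of a bounded semigroup has no positive eigenvalue: the orbit of an eigenvector
would grow like `e^{εt}`. -/
lemma eq_zero_of_deriv_eq_smul (hT : IsBddSemigroup T M) {z : H} {ε : ℝ} (hε : 0 < ε)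
    (h : HasDerivWithinAt (fun t => T t z) ((ε : ℂ) • z) (Ici 0) 0) : z = 0 := by
  have key : ∀ t : ℝ, 0 ≤ t → z = Complex.exp (-(ε : ℂ) * t) • T t z := by
    intro t ht
    have := constant_of_has_deriv_right_zero
      (f := fun t : ℝ => Complex.exp (-(ε : ℂ) * t) • T t z) (a := 0) (b := t)
      (ContinuousOn.smul (by fun_prop) ((hT.cont z).mono fun r hr => hr.1))
      (fun r hr => by simpa using hT.hasDerivWithinAt_exp_smul_orbit h (-(ε : ℂ)) hr.1)
      t ⟨ht, le_rfl⟩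
    simpa [hT.zero] using this.symm
  have bd : ∀ᶠ t : ℝ in atTop, ‖z‖ ≤ Real.exp (-(ε * t)) * (M * ‖z‖) := by
    filter_upwards [eventually_ge_atTop 0] with t ht
    calc ‖z‖ = ‖Complex.exp (-(ε : ℂ) * t) • T t z‖ := by rw [← key t ht]
      _ ≤ _ := by
        rw [norm_smul, Complex.norm_exp]
        simpa using mul_le_mul_of_nonneg_left (hT.norm_apply_le ht z) (Real.exp_pos _).le
  have lim : Tendsto (fun t : ℝ => Real.exp (-(ε * t)) * (M * ‖z‖)) atTop (𝓝 (0 * (M * ‖z‖))) :=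
    (Real.tendsto_exp_neg_atTop_nhds_zero.comp (tendsto_id.const_mul_atTop hε)).mul_const _
  have := ge_of_tendsto lim bd
  rw [zero_mul] at this
  exact norm_le_zero_iff.1 this

/-- The Fourier transform of an orbit truncated to the time window `(0, 2t]`, recentred at `t` and
rescaled by `a`. With `μ = 2πav` and `y = (A - iμ)⁻¹ x`, the integrand is the derivative of
`a e^{-2πivr} T(t + r/a) y`, so that only boundary terms survive. -/
lemma fourier_orbit [CompleteSpace H] (hT : IsBddSemigroup T M) {x y : H} {a t v : ℝ} (ha : 0 < a)
    (ht : 0 < t)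
    (h : HasDerivWithinAt (fun t => T t y)
      (x + ((2 * Real.pi * a * v : ℝ) * Complex.I) • y) (Ici 0) 0) :
    𝓕 ((Ioc (-(a * t)) (a * t)).indicator fun r => T (t + r / a) x) v =
      (a : ℂ) • (Complex.exp (-2 * Real.pi * a * v * t * Complex.I) • T (2 * t) y
        - Complex.exp (2 * Real.pi * a * v * t * Complex.I) • y) := by
  set c : ℂ := -((2 * Real.pi * a * v : ℝ) * Complex.I) with hc
  have hat : -(a * t) ≤ a * t := by nlinarith [mul_pos ha ht]
  have hpos : ∀ r, -(a * t) ≤ r → 0 ≤ t + r / a := fun r hr => by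
    have : -t ≤ r / a := by rw [le_div_iff₀ ha]; linarith
    linarith
  have hcont : ∀ x : H, ContinuousOn (fun r => T (t + r / a) x) (Icc (-(a * t)) (a * t)) :=
    fun x => (hT.cont x).comp (by fun_prop) fun r hr => hpos r hr.1
  have hderiv : ∀ r ∈ Ioo (-(a * t)) (a * t), HasDerivWithinAt
      (fun r : ℝ => (a : ℂ) • Complex.exp (c * (r / a)) • T (t + r / a) y)
      (Complex.exp (c * (r / a)) • T (t + r / a) x) (Ioi r) r := by
    intro r hr
    have h0 := hT.hasDerivWithinAt_exp_smul_orbit h c (hpos r hr.1.le)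
    have hin : HasDerivAt (fun r : ℝ => t + r / a) (1 / a) r := by
      simpa using ((hasDerivAt_id r).div_const a).const_add t
    have h1 := h0.scomp r (hin.hasDerivWithinAt (s := Ioi r)) (fun q hq => by
      have : r / a ≤ q / a := by gcongr; exact (le_of_lt hq)
      simpa using this)
    have h2 := (h1.const_smul ((a : ℂ) * Complex.exp (-(c * t))))
    have e : ∀ q : ℝ, Complex.exp (c * (q / a))
        = Complex.exp (-(c * t)) * Complex.exp (c * (t + q / a : ℝ)) := fun q => by
      rw [← Complex.exp_add]; congr 1; push_cast; ring
    convert h2 using 1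
    · funext q
      simp [e, smul_smul, mul_assoc]
    · rw [e, hc, add_assoc, neg_smul, add_neg_cancel, add_zero, ← Complex.coe_smul, smul_smul,
        smul_smul]
      congr 1
      push_cast
      have : (a : ℂ) ≠ 0 := by exact_mod_cast ha.ne'
      field_simp
  rw [Real.fourier_real_eq_integral_exp_smul]
  have e1 : (fun r : ℝ => Complex.exp (↑(-2 * Real.pi * r * v) * Complex.I) •
      (Ioc (-(a * t)) (a * t)).indicator (fun r => T (t + r / a) x) r)
      = (Ioc (-(a * t)) (a * t)).indicator
        fun r : ℝ => Complex.exp (c * (r / a)) • T (t + r / a) x := by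
    funext r
    by_cases hr : r ∈ Ioc (-(a * t)) (a * t)
    · simp only [indicator_of_mem hr]
      congr 2
      have : (a : ℂ) ≠ 0 := by exact_mod_cast ha.ne'
      rw [hc]; push_cast; field_simp
    · simp [indicator_of_notMem hr]
  rw [e1, integral_indicator measurableSet_Ioc, ← intervalIntegral.integral_of_le hat]
  rw [intervalIntegral.integral_eq_sub_of_hasDeriv_right_of_le hat _ hderiv]
  · have : (a : ℂ) ≠ 0 := by exact_mod_cast ha.ne'
    have e2 : t + a * t / a = 2 * t := by field_simp; ring
    have e3 : t + -(a * t) / a = 0 := by field_simp; ring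
    rw [e2, e3, hT.zero, smul_sub, hc]
    congr 3
    · congr 1; push_cast; field_simp
    · congr 1; push_cast; field_simp
  · exact (ContinuousOn.smul (by fun_prop) (hcont x)).intervalIntegrable_of_Icc hat
  · exact continuousOn_const.smul (ContinuousOn.smul (by fun_prop) (hcont y))

end IsBddSemigroup
/-! ### Fourier cutoffs -/

/-- A smooth cutoff `ψ` supported in `[-1, 1]` with `ψ(0) = 1`; the last condition is expressed, via
Fourier inversion, as `∫ ψ̂ = 1`. -/
lemma exists_cutoff : ∃ ψ : 𝓢(ℝ, ℂ), HasCompactSupport ψ ∧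
    (∀ v, 1 < |v| → ψ v = 0 ∧ deriv ψ v = 0) ∧
    Integrable (𝓕 (ψ : ℝ → ℂ)) ∧ Integrable (fun r : ℝ => ‖𝓕 (ψ : ℝ → ℂ) r‖ * |r|) ∧
    ∫ r, 𝓕 (ψ : ℝ → ℂ) r = 1 := by
  let b : ContDiffBump (0 : ℝ) := ⟨1 / 2, 1, by norm_num, by norm_num⟩
  have h1 : HasCompactSupport fun v : ℝ => ((b v : ℝ) : ℂ) :=
    b.hasCompactSupport.comp_left (g := fun r : ℝ => (r : ℂ)) (by simp)
  have h2 : ContDiff ℝ ∞ fun v : ℝ => ((b v : ℝ) : ℂ) :=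
    Complex.ofRealCLM.contDiff.comp b.contDiff
  refine ⟨h1.toSchwartzMap h2, h1, ?_, ?_, ?_, ?_⟩
  · intro v hv
    have hz : (fun v : ℝ => ((b v : ℝ) : ℂ)) =ᶠ[𝓝 v] fun _ => 0 := by
      filter_upwards [(isOpen_lt continuous_const continuous_abs).mem_nhds hv] with w hw
      have : b w = 0 := b.zero_of_le_dist (by simpa using (le_of_lt hw))
      simp [this]
    exact ⟨hz.eq_of_nhds, by simpa using! hz.deriv_eq⟩
  · exact (𝓕 (h1.toSchwartzMap h2)).integrable
  · have := (𝓕 (h1.toSchwartzMap h2)).integrable_pow_mul volume 1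
    simpa [mul_comm, SchwartzMap.fourier_coe] using! this
  · have h : 𝓕⁻ (𝓕 (h1.toSchwartzMap h2)) 0 = h1.toSchwartzMap h2 0 := by
      rw [FourierTransform.fourierInv_fourier_eq]
    rw [SchwartzMap.fourierInv_coe, SchwartzMap.fourier_coe, Real.fourierInv_eq] at h
    have hb : b 0 = 1 := b.one_of_mem_closedBall (by simp [b])
    simpa [hb] using! h

open Real in
/-- Decay of the Fourier transform of a `C¹` function supported in `[-1, 1]`, by one integration
by parts. -/
lemma norm_fourier_le {E : Type*} [NormedAddCommGroup E] [NormedSpace ℂ E] {F : ℝ → E} {K r : ℝ}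
    (hF : ContDiff ℝ 1 F) (hs : HasCompactSupport F) (hK : ∀ v, 1 < |v| → deriv F v = 0)
    (hK' : ∀ v, |v| ≤ 1 → ‖deriv F v‖ ≤ K) (hr : r ≠ 0) : ‖𝓕 F r‖ ≤ K / |r| := by
  have hd : Continuous (deriv F) := hF.continuous_deriv le_rfl
  have hK0 : 0 ≤ K := (norm_nonneg _).trans (hK' 0 (by simp))
  have h := congrFun (Real.fourier_deriv (hF.continuous.integrable_of_hasCompactSupport hs)
    (hF.differentiable one_ne_zero) (hd.integrable_of_hasCompactSupport hs.deriv)) r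
  have h1 : ‖𝓕 (deriv F) r‖ ≤ 2 * K := by
    refine (VectorFourier.norm_fourierIntegral_le_integral_norm _ _ _ _ _).trans ?_
    have : ∀ v, ‖deriv F v‖ ≤ (Icc (-1 : ℝ) 1).indicator (fun _ => K) v := by
      intro v
      by_cases hv : |v| ≤ 1
      · rw [indicator_of_mem (show v ∈ Icc (-1 : ℝ) 1 from abs_le.1 hv)]; exact hK' v hv
      · rw [hK v (not_le.1 hv), norm_zero]; exact indicator_nonneg (fun _ _ => hK0) _
    refine (integral_mono_of_nonneg (ae_of_all _ fun _ => norm_nonneg _) ?_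
      (ae_of_all _ this)).trans ?_
    · exact (integrable_indicator_iff measurableSet_Icc).2 (by simp)
    · rw [integral_indicator measurableSet_Icc]; simp; norm_num
  rw [h, norm_smul] at h1
  have h2 : ‖(2 * π * Complex.I * r : ℂ)‖ = 2 * π * |r| := by
    simp [abs_of_pos pi_pos]
  rw [h2] at h1
  rw [le_div_iff₀ (abs_pos.2 hr)]
  have : 1 * (‖𝓕 F r‖ * |r|) ≤ π * (‖𝓕 F r‖ * |r|) := by
    gcongr; linarith [pi_gt_three]
  linarith

/-! ### The resolvent on the imaginary axis -/

/-- `R μ` plays the role of `(A - iμ)⁻¹`, where `A` is the generator of `T`: the vector `R μ x` is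
in the domain of the generator, `A (R μ x) = x + iμ R μ x`, and the resolvent identity holds. -/
structure IsResolventFamily (T R : ℝ → H →L[ℂ] H) : Prop where
  deriv_orbit : ∀ (μ : ℝ) (x : H), HasDerivWithinAt (fun t => T t (R μ x))
    (x + ((μ : ℂ) * Complex.I) • R μ x) (Ici 0) 0
  sub : ∀ μ ν : ℝ, R μ - R ν = (((μ - ν : ℝ) : ℂ) * Complex.I) • (R μ).comp (R ν)

namespace IsResolventFamily

variable {T R : ℝ → H →L[ℂ] H} {M : ℝ}

/-- The resolvent identity alone forces norm continuity: it bounds `‖R μ‖` by `2 ‖R ν‖` for `μ`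
near `ν`, and then gives a Lipschitz estimate there. -/
lemma continuous (hR : IsResolventFamily T R) : Continuous R := by
  refine continuous_iff_continuousAt.2 fun ν => ?_
  have hle : ∀ μ : ℝ, ‖R μ - R ν‖ ≤ |μ - ν| * (‖R μ‖ * ‖R ν‖) := fun μ => by
    rw [hR.sub, norm_smul, norm_mul, Complex.norm_I, mul_one, Complex.norm_real, Real.norm_eq_abs]
    exact mul_le_mul_of_nonneg_left ((R μ).opNorm_comp_le (R ν)) (abs_nonneg (μ - ν))
  have h0 : Tendsto (fun μ : ℝ => |μ - ν| * ‖R ν‖) (𝓝 ν) (𝓝 0) := by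
    have : Continuous fun μ : ℝ => |μ - ν| * ‖R ν‖ := by fun_prop
    simpa using this.tendsto ν
  have hev : ∀ᶠ μ in 𝓝 ν, ‖R μ - R ν‖ ≤ |μ - ν| * ‖R ν‖ * (2 * ‖R ν‖) := by
    filter_upwards [h0.eventually (gt_mem_nhds (show (0 : ℝ) < 1 / 2 by norm_num))] with μ hμ
    have h1 : ‖R μ‖ ≤ 2 * ‖R ν‖ := by
      have := norm_le_norm_add_norm_sub' (R μ) (R ν)
      nlinarith [hle μ, norm_nonneg (R μ)]
    calc ‖R μ - R ν‖ ≤ |μ - ν| * (‖R μ‖ * ‖R ν‖) := hle μ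
      _ = |μ - ν| * ‖R ν‖ * ‖R μ‖ := by ring
      _ ≤ _ := by gcongr
  rw [ContinuousAt, tendsto_iff_norm_sub_tendsto_zero]
  refine squeeze_zero' (Eventually.of_forall fun _ => norm_nonneg _) hev ?_
  simpa using h0.mul_const (2 * ‖R ν‖)

lemma hasDerivAt (hR : IsResolventFamily T R) (ν : ℝ) :
    HasDerivAt R (Complex.I • (R ν).comp (R ν)) ν := by
  rw [hasDerivAt_iff_tendsto_slope]
  have hc : Continuous fun μ => (R μ).comp (R ν) := hR.continuous.clm_comp continuous_const
  have h1 : Tendsto (fun μ => Complex.I • (R μ).comp (R ν)) (𝓝[≠] ν)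
      (𝓝 (Complex.I • (R ν).comp (R ν))) :=
    ((hc.tendsto ν).const_smul Complex.I).mono_left nhdsWithin_le_nhds
  refine h1.congr' ?_
  filter_upwards [self_mem_nhdsWithin] with μ hμ
  have hne : ((μ : ℂ) - ν) ≠ 0 := sub_ne_zero.2 (by exact_mod_cast hμ)
  rw [slope_def_module, hR.sub, ← Complex.coe_smul, smul_smul]
  congr 1
  push_cast
  field_simp

/-- The range of `R 0` is the whole domain of the generator, on which `R 0` inverts the generator.
For small `ε > 0` a Neumann series yields `y` in the range of `R 0` with `(A - ε) y = (A - ε) z`,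
and `ε` is not an eigenvalue of the generator. -/
lemma eq_of_hasDeriv [CompleteSpace H] (hT : IsBddSemigroup T M) (hR : IsResolventFamily T R)
    {z w : H} (h : HasDerivWithinAt (fun t => T t z) w (Ici 0) 0) : z = R 0 w := by
  obtain ⟨ε, hε, hεR⟩ : ∃ ε : ℝ, 0 < ε ∧ ‖(ε : ℂ) • R 0‖ < 1 := by
    refine ⟨1 / (2 * (‖R 0‖ + 1)), by positivity, ?_⟩
    have := norm_nonneg (R 0)
    rw [norm_smul, Complex.norm_real, Real.norm_of_nonneg (by positivity), div_mul_eq_mul_div,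
      div_lt_one (by positivity)]
    linarith
  obtain ⟨p, hp⟩ : ∃ p, p - (ε : ℂ) • R 0 p = w - (ε : ℂ) • z := by
    obtain ⟨U, hU⟩ := isUnit_one_sub_of_norm_lt_one hεR
    refine ⟨(↑U⁻¹ : H →L[ℂ] H) (w - (ε : ℂ) • z), ?_⟩
    have := congrArg (fun L : H →L[ℂ] H => L (w - (ε : ℂ) • z)) U.mul_inv
    rw [hU] at this
    simpa using this
  have hy := hR.deriv_orbit 0 p
  have hzy : z - R 0 p = 0 := by
    refine hT.eq_zero_of_deriv_eq_smul hε ?_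
    have := h.sub hy
    convert this using 1
    · funext t; simp
    · simp only [Complex.ofReal_zero, zero_mul, zero_smul, add_zero]
      rw [smul_sub, sub_eq_sub_iff_add_eq_add, add_comm, ← sub_eq_iff_eq_add]
      rw [eq_comm, ← sub_eq_zero] at hp ⊢
      rw [← hp]; abel
  rw [sub_eq_zero] at hzy
  rw [← hzy] at hp
  rw [hzy, sub_left_inj.1 hp]

lemma commute [CompleteSpace H] (hT : IsBddSemigroup T M) (hR : IsResolventFamily T R)
    {s : ℝ} (hs : 0 ≤ s) (h : H) : T s (R 0 h) = R 0 (T s h) := by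
  refine hR.eq_of_hasDeriv hT ?_
  have h1 := ((T s).restrictScalars ℝ).hasFDerivAt.comp_hasDerivWithinAt 0 (hR.deriv_orbit 0 h)
  have hc : ∀ t ∈ Ici (0 : ℝ), T t (T s (R 0 h)) = T s (T t (R 0 h)) := fun t ht => by
    have e1 := hT.add s t hs ht
    rw [add_comm, hT.add t s ht hs] at e1
    exact congrArg (fun L : H →L[ℂ] H => L (R 0 h)) e1
  simpa using h1.congr hc (hc 0 self_mem_Ici)

/-! ### Logarithmic decay -/

lemma hasDerivAt_cutoff_smul (hR : IsResolventFamily T R) (ψ : 𝓢(ℝ, ℂ)) (a : ℝ) (x : H) (v : ℝ) :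
    HasDerivAt (fun v : ℝ => ψ v • R (2 * Real.pi * a * v) x)
      (ψ v • ((2 * Real.pi * a) • Complex.I •
        R (2 * Real.pi * a * v) (R (2 * Real.pi * a * v) x))
          + deriv ψ v • R (2 * Real.pi * a * v) x) v := by
  have hin : HasDerivAt (fun v : ℝ => 2 * Real.pi * a * v) (2 * Real.pi * a) v := by
    simpa using (hasDerivAt_id v).const_mul (2 * Real.pi * a)
  have h1 := (hR.hasDerivAt (2 * Real.pi * a * v)).scomp v hin
  have h2 : HasDerivAt (fun v : ℝ => R (2 * Real.pi * a * v) x)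
      ((2 * Real.pi * a) • Complex.I • R (2 * Real.pi * a * v) (R (2 * Real.pi * a * v) x)) v :=
    ((ContinuousLinearMap.apply ℂ H x).restrictScalars ℝ).hasFDerivAt.comp_hasDerivAt v h1
  exact ψ.differentiableAt.hasDerivAt.smul h2

lemma contDiff_cutoff_smul (hR : IsResolventFamily T R) (ψ : 𝓢(ℝ, ℂ)) (a : ℝ) (x : H) :
    ContDiff ℝ 1 (fun v : ℝ => ψ v • R (2 * Real.pi * a * v) x) := by
  refine contDiff_one_iff_deriv.2
    ⟨fun v => (hR.hasDerivAt_cutoff_smul ψ a x v).differentiableAt, ?_⟩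
  have hψ : Continuous (deriv ψ) := (ψ.smooth 1).continuous_deriv le_rfl
  have h1 : Continuous fun v : ℝ => R (2 * Real.pi * a * v) :=
    hR.continuous.comp (by fun_prop)
  have h2 : Continuous fun v : ℝ => R (2 * Real.pi * a * v) x := h1.clm_apply continuous_const
  have h3 : Continuous fun v : ℝ => R (2 * Real.pi * a * v) (R (2 * Real.pi * a * v) x) :=
    h1.clm_apply h2
  rw [funext fun v => (hR.hasDerivAt_cutoff_smul ψ a x v).deriv]
  exact (ψ.continuous.smul ((h3.const_smul _).const_smul _)).add (hψ.smul h2)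

/-- The contribution of the frequencies below `a` at time `t` is `O(e^{4πCa} / t)`: one integration
by parts gains `1 / (at)` and costs the square of the resolvent bound on `|μ| ≤ 2πa`. -/
lemma exists_norm_fourier_le (hR : IsResolventFamily T R) {B C : ℝ} (hC : 0 < C) (hB : 1 ≤ B)
    (hbd : ∀ μ, ‖R μ‖ ≤ B * Real.exp (C * |μ|)) {ψ : 𝓢(ℝ, ℂ)} (hψ : HasCompactSupport ψ)
    (hψ0 : ∀ v, 1 < |v| → ψ v = 0 ∧ deriv ψ v = 0) :
    ∃ K, 0 ≤ K ∧ ∀ (a t r : ℝ) (x : H), 1 ≤ a → 0 < t → |r| = a * t →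
      ‖𝓕 (fun v : ℝ => ψ v • R (2 * Real.pi * a * v) x) r‖
        ≤ K * Real.exp (4 * Real.pi * C * a) / t * ‖x‖ := by
  obtain ⟨P, hP⟩ := ψ.continuous.bounded_above_of_compact_support hψ
  obtain ⟨Q, hQ⟩ := ((ψ.smooth 1).continuous_deriv le_rfl).bounded_above_of_compact_support hψ.deriv
  have hP0 : 0 ≤ P := (norm_nonneg _).trans (hP 0)
  have hQ0 : 0 ≤ Q := (norm_nonneg _).trans (hQ 0)
  have hpi := Real.pi_pos
  refine ⟨(P * (2 * Real.pi) + Q) * B ^ 2, by positivity, fun a t r x ha ht hr => ?_⟩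
  set E := B * Real.exp (2 * Real.pi * C * a) with hE
  have hE1 : 1 ≤ E := one_le_mul_of_one_le_of_one_le hB (Real.one_le_exp (by positivity))
  have hE2 : B ^ 2 * Real.exp (4 * Real.pi * C * a) = E ^ 2 := by
    rw [hE, mul_pow, ← Real.exp_nat_mul]; congr 2; push_cast; ring
  have hr0 : r ≠ 0 := by
    rw [← abs_pos, hr]; positivity
  have hmain := norm_fourier_le (F := fun v : ℝ => ψ v • R (2 * Real.pi * a * v) x)
    (K := (P * (2 * Real.pi) + Q) * a * E ^ 2 * ‖x‖)
    (hR.contDiff_cutoff_smul ψ a x) hψ.smul_right ?_ ?_ hr0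
  · refine hmain.trans (le_of_eq ?_)
    rw [hr, mul_assoc _ (B ^ 2), hE2]
    have : a ≠ 0 := by positivity
    field_simp
  · intro v hv
    rw [(hR.hasDerivAt_cutoff_smul ψ a x v).deriv, (hψ0 v hv).1, (hψ0 v hv).2]
    simp
  · intro v hv
    rw [(hR.hasDerivAt_cutoff_smul ψ a x v).deriv]
    have hRv : ‖R (2 * Real.pi * a * v)‖ ≤ E := by
      refine (hbd _).trans ?_
      rw [hE]
      refine mul_le_mul_of_nonneg_left (Real.exp_le_exp.2 ?_) (by positivity)
      rw [abs_mul, abs_of_pos (by positivity)]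
      calc C * (2 * Real.pi * a * |v|) ≤ C * (2 * Real.pi * a * 1) := by gcongr
        _ = _ := by ring
    have h1 : ∀ z, ‖R (2 * Real.pi * a * v) z‖ ≤ E * ‖z‖ := fun z =>
      (ContinuousLinearMap.le_opNorm _ z).trans (by gcongr)
    calc _ ≤ P * ((2 * Real.pi * a) * (E * (E * ‖x‖))) + Q * (E * ‖x‖) := by
          refine (norm_add_le _ _).trans (add_le_add ?_ ?_)
          · rw [norm_smul, norm_smul, norm_smul, Complex.norm_I, one_mul, Real.norm_eq_abs,
              abs_of_pos (by positivity)]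
            gcongr
            · exact hP v
            · exact (h1 _).trans (by gcongr; exact h1 x)
          · rw [norm_smul]
            gcongr
            · exact hQ v
            · exact h1 x
      _ ≤ P * ((2 * Real.pi * a) * (E * (E * ‖x‖))) + Q * ((a * E) * (E * ‖x‖)) := by
          refine add_le_add_right (mul_le_mul_of_nonneg_left ?_ hQ0) _
          exact le_mul_of_one_le_left (by positivity) (one_le_mul_of_one_le_of_one_le ha hE1)
      _ = _ := by ring

/-- The orbit smoothed by `ψ̂` at frequency scale `a` equals a difference of two Fourier integrals of
the localized resolvent. This is self-adjointness of the Fourier transform combined with the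
explicit transform of the truncated orbit. -/
lemma integral_fourier_smul_orbit [CompleteSpace H] (hT : IsBddSemigroup T M)
    (hR : IsResolventFamily T R) {ψ : 𝓢(ℝ, ℂ)} (hψ : HasCompactSupport ψ) {a t : ℝ} (ha : 0 < a)
    (ht : 0 < t) (x : H) :
    ∫ r, 𝓕 (ψ : ℝ → ℂ) r • (Ioc (-(a * t)) (a * t)).indicator (fun r => T (t + r / a) x) r =
      (a : ℂ) • (T (2 * t) (𝓕 (fun v : ℝ => ψ v • R (2 * Real.pi * a * v) x) (a * t))
        - 𝓕 (fun v : ℝ => ψ v • R (2 * Real.pi * a * v) x) (-(a * t))) := by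
  have hg : Integrable ((Ioc (-(a * t)) (a * t)).indicator fun r => T (t + r / a) x) := by
    rw [integrable_indicator_iff measurableSet_Ioc]
    refine (ContinuousOn.integrableOn_Icc ?_).mono_set Ioc_subset_Icc_self
    refine (hT.cont x).comp (by fun_prop) fun r hr => ?_
    have : -t ≤ r / a := by rw [le_div_iff₀ ha]; linarith [hr.1]
    simp only [mem_Ici]; linarith
  have hself := VectorFourier.integral_bilin_fourierIntegral_eq_flip
    (ContinuousLinearMap.lsmul ℂ ℂ : ℂ →L[ℂ] H →L[ℂ] H) (L := innerₗ ℝ)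
    Real.continuous_fourierChar continuous_inner (ψ.integrable (μ := volume)) hg
  have hself' : ∫ r, 𝓕 (ψ : ℝ → ℂ) r •
      (Ioc (-(a * t)) (a * t)).indicator (fun r => T (t + r / a) x) r
      = ∫ v, ψ v • 𝓕 ((Ioc (-(a * t)) (a * t)).indicator (fun r => T (t + r / a) x)) v := by
    simpa using! hself
  have hF : Continuous fun v : ℝ => ψ v • R (2 * Real.pi * a * v) x :=
    (hR.contDiff_cutoff_smul ψ a x).continuous
  have hFexp : ∀ b : ℝ, Integrable fun v : ℝ => Complex.exp (↑(-2 * Real.pi * v * b) * Complex.I) •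
      ψ v • R (2 * Real.pi * a * v) x := fun b =>
    (Continuous.smul (by fun_prop) hF).integrable_of_hasCompactSupport
      (HasCompactSupport.smul_left hψ.smul_right)
  rw [hself', Real.fourier_real_eq_integral_exp_smul, Real.fourier_real_eq_integral_exp_smul,
    ← ContinuousLinearMap.integral_comp_comm _ (hFexp _),
    ← integral_sub ((T (2 * t)).integrable_comp (hFexp _)) (hFexp _), ← integral_smul]
  congr 1
  funext v
  rw [hT.fourier_orbit ha ht (hR.deriv_orbit (2 * Real.pi * a * v) x), smul_comm, smul_sub]
  congr 2
  · rw [map_smul, map_smul, smul_comm]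
    congr 2; push_cast; ring_nf
  · rw [smul_comm]
    congr 2; push_cast; ring_nf

/-- Decay estimate with a free frequency cutoff `a`: the first term comes from high frequencies,
where the regularity of `x` gains `1 / a`, and the second from frequencies below `a`. -/
lemma exists_norm_orbit_le [CompleteSpace H] (hT : IsBddSemigroup T M)
    (hR : IsResolventFamily T R) {B C : ℝ} (hC : 0 < C) (hB : 1 ≤ B)
    (hbd : ∀ μ, ‖R μ‖ ≤ B * Real.exp (C * |μ|)) :
    ∃ K, 0 ≤ K ∧ ∀ (a t : ℝ) (x w : H), 1 ≤ a → 1 ≤ t →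
      HasDerivWithinAt (fun t => T t x) w (Ici 0) 0 →
      ‖T t x‖ ≤ K * (‖w‖ + ‖x‖) / a + K * a * Real.exp (4 * Real.pi * C * a) / t * ‖x‖ := by
  obtain ⟨ψ, hψ, hψ0, hφ, hφ1, hφ2⟩ := exists_cutoff
  obtain ⟨K, hK, hKb⟩ := hR.exists_norm_fourier_le hC hB hbd hψ hψ0
  set φ : ℝ → ℂ := 𝓕 (ψ : ℝ → ℂ)
  set m := ∫ r, ‖φ r‖ * |r|
  have hm : 0 ≤ m := integral_nonneg fun r => by positivity
  have hM := hT.nonneg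
  refine ⟨m * M + (M + 1) * K, by positivity, fun a t x w ha ht hw => ?_⟩
  have ha0 : 0 < a := one_pos.trans_le ha
  have ht0 : 0 < t := one_pos.trans_le ht
  set g := (Ioc (-(a * t)) (a * t)).indicator (fun r => T (t + r / a) x) with hgdef
  have hpos : ∀ r, -(a * t) < r → 0 ≤ t + r / a := fun r hr => by
    have : -t ≤ r / a := by rw [le_div_iff₀ ha0]; linarith
    linarith
  have hgm : AEStronglyMeasurable g := by
    rw [hgdef, aestronglyMeasurable_indicator_iff measurableSet_Ioc]
    refine ContinuousOn.aestronglyMeasurable ?_ measurableSet_Ioc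
    exact (hT.cont x).comp (by fun_prop) fun r hr => hpos r hr.1
  have hgb : ∀ r, ‖g r‖ ≤ M * ‖x‖ := fun r => by
    by_cases hr : r ∈ Ioc (-(a * t)) (a * t)
    · rw [hgdef, indicator_of_mem hr]
      exact hT.norm_apply_le (hpos r hr.1) x
    · rw [hgdef, indicator_of_notMem hr, norm_zero]; positivity
  have hgi : Integrable fun r => φ r • g r := by
    refine (hφ.norm.mul_const (M * ‖x‖)).mono' (hφ.aestronglyMeasurable.smul hgm)
      (ae_of_all _ fun r => ?_)
    rw [norm_smul]
    gcongr
    exact hgb r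
  have hsplit : T t x = (∫ r, φ r • (T t x - g r)) + ∫ r, φ r • g r := by
    simp_rw [smul_sub]
    rw [integral_sub (hφ.smul_const _) hgi, integral_smul_const, hφ2, one_smul, sub_add_cancel]
  -- Inside the window the orbit is Lipschitz; outside it `|r| ≥ a`, so `1 ≤ |r| / a`.
  have h1 : ‖∫ r, φ r • (T t x - g r)‖ ≤ m * (M * (‖w‖ + ‖x‖) / a) := by
    rw [← integral_mul_const]
    refine norm_integral_le_of_norm_le (hφ1.mul_const _) (ae_of_all _ fun r => ?_)
    rw [norm_smul, mul_assoc]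
    gcongr
    by_cases hr : r ∈ Ioc (-(a * t)) (a * t)
    · rw [hgdef, indicator_of_mem hr]
      refine (hT.norm_sub_le hw (hpos r hr.1) ht0.le).trans ?_
      rw [sub_add_cancel_left, abs_neg, abs_div, abs_of_pos ha0]
      calc M * ‖w‖ * (|r| / a) = |r| * (M * ‖w‖ / a) := by ring
        _ ≤ _ := by gcongr; linarith [norm_nonneg x]
    · rw [hgdef, indicator_of_notMem hr, sub_zero]
      refine (hT.norm_apply_le ht0.le x).trans ?_
      have har : a ≤ |r| := by
        by_contra! hcon
        have h2 : a ≤ a * t := le_mul_of_one_le_right ha0.le ht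
        have := abs_lt.1 (hcon.trans_le h2)
        exact hr ⟨this.1, this.2.le⟩
      calc M * ‖x‖ = a * (M * ‖x‖ / a) := by field_simp
        _ ≤ _ := by gcongr; linarith [norm_nonneg w]
  have h2 : ‖∫ r, φ r • g r‖
      ≤ a * ((M + 1) * (K * Real.exp (4 * Real.pi * C * a) / t * ‖x‖)) := by
    rw [hgdef, hR.integral_fourier_smul_orbit hT hψ ha0 ht0 x, norm_smul, Complex.norm_real,
      Real.norm_of_nonneg ha0.le]
    gcongr
    rw [add_mul, one_mul]
    refine (_root_.norm_sub_le _ _).trans (add_le_add ?_ ?_)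
    · refine (hT.norm_apply_le (by positivity) _).trans ?_
      gcongr
      exact hKb a t _ x ha ht0 (abs_of_pos (by positivity))
    · exact hKb a t _ x ha ht0 (by rw [abs_neg, abs_of_pos (by positivity)])
  rw [hsplit]
  refine (norm_add_le _ _).trans (add_le_add (h1.trans ?_) (h2.trans ?_))
  · rw [← mul_div_assoc, ← mul_assoc]
    gcongr
    exact le_add_of_nonneg_right (by positivity)
  · calc _ = ((M + 1) * K) * a * Real.exp (4 * Real.pi * C * a) / t * ‖x‖ := by ring
      _ ≤ _ := by gcongr; exact le_add_of_nonneg_left (by positivity)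

/-- The case `k = 1`, obtained from the previous estimate with `a` equal to one plus a small
multiple of `log (2 + t)`. -/
lemma exists_log_decay [CompleteSpace H] (hT : IsBddSemigroup T M)
    (hR : IsResolventFamily T R) {B C : ℝ} (hC : 0 < C) (hB : 1 ≤ B)
    (hbd : ∀ μ, ‖R μ‖ ≤ B * Real.exp (C * |μ|)) :
    ∃ K, 0 ≤ K ∧ ∀ (t : ℝ) (h : H), 0 ≤ t → ‖T t (R 0 h)‖ ≤ K / Real.log (2 + t) * ‖h‖ := by
  obtain ⟨K, hK, hb⟩ := hR.exists_norm_orbit_le hT hC hB hbd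
  have hM := hT.nonneg
  set N := ‖R 0‖
  have hN : 0 ≤ N := norm_nonneg _
  set q := 4 * Real.pi * C + 1 with hq
  have hq0 : 0 < q := by have := Real.pi_pos; positivity
  refine ⟨M * N * 2 + K * (1 + N) * (2 * q) + K * Real.exp q * 3 * N * 2, by positivity,
    fun t h ht => ?_⟩
  set L := Real.log (2 + t) with hL
  have hL0 : 0 < L := Real.log_pos (by linarith)
  have hx : ‖R 0 h‖ ≤ N * ‖h‖ := (R 0).le_opNorm h
  have hsum : ∀ X Y Z : ℝ, 0 ≤ X → 0 ≤ Y → 0 ≤ Z →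
      (X + Y + Z) / L * ‖h‖ = X / L * ‖h‖ + Y / L * ‖h‖ + Z / L * ‖h‖ := by
    intros; ring
  rw [hsum _ _ _ (by positivity) (by positivity) (by positivity)]
  rcases lt_or_ge t 1 with h1 | h1
  · have hL2 : L ≤ 2 := (Real.log_le_sub_one_of_pos (by linarith)).trans (by linarith)
    have : ‖T t (R 0 h)‖ ≤ M * N * 2 / L * ‖h‖ := by
      calc ‖T t (R 0 h)‖ ≤ M * (N * ‖h‖) := (hT.norm_apply_le ht _).trans (by gcongr)
        _ = M * N * ‖h‖ * 1 := by ring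
        _ ≤ M * N * ‖h‖ * (2 / L) := by
          gcongr
          rwa [one_le_div hL0]
        _ = _ := by ring
    have p1 : 0 ≤ K * (1 + N) * (2 * q) / L * ‖h‖ := by positivity
    have p2 : 0 ≤ K * Real.exp q * 3 * N * 2 / L * ‖h‖ := by positivity
    linarith
  -- This cutoff makes `a e^{4πCa}` at most a constant times `√(2 + t)`.
  · set a := 1 + L / (2 * q) with ha
    have ha1 : 1 ≤ a := by rw [ha]; linarith [div_pos hL0 (mul_pos two_pos hq0)]
    have ha2 : L / (2 * q) ≤ a := by rw [ha]; linarith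
    set S := Real.sqrt (2 + t) with hS
    have hS0 : 0 < S := Real.sqrt_pos.2 (by linarith)
    have hSS : S * S = 2 + t := Real.mul_self_sqrt (by linarith)
    have hLS : L = 2 * Real.log S := by
      rw [hL, ← hSS, Real.log_mul hS0.ne' hS0.ne']; ring
    have hLS' : L ≤ 2 * S := by
      rw [hLS]; linarith [Real.log_le_sub_one_of_pos hS0]
    have hexp : a * Real.exp (4 * Real.pi * C * a) ≤ Real.exp q * S := by
      calc a * Real.exp (4 * Real.pi * C * a)
          ≤ Real.exp a * Real.exp (4 * Real.pi * C * a) := by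
            gcongr; linarith [Real.add_one_le_exp a]
        _ = Real.exp (q + L / 2) := by
            rw [← Real.exp_add, ha, hq]
            congr 1
            rw [hq] at hq0
            field_simp
            ring
        _ = _ := by
            rw [Real.exp_add, hLS, mul_div_cancel_left₀ _ two_ne_zero, Real.exp_log hS0]
    have hw : HasDerivWithinAt (fun t => T t (R 0 h)) h (Ici 0) 0 := by
      simpa using hR.deriv_orbit 0 h
    have hmain := hb a t (R 0 h) h ha1 h1 hw
    have e1 : K * (‖h‖ + ‖R 0 h‖) / a ≤ K * (1 + N) * (2 * q) / L * ‖h‖ := by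
      calc K * (‖h‖ + ‖R 0 h‖) / a ≤ K * (‖h‖ + N * ‖h‖) / (L / (2 * q)) := by gcongr
        _ = _ := by field_simp
    have e2 : K * a * Real.exp (4 * Real.pi * C * a) / t * ‖R 0 h‖
        ≤ K * Real.exp q * 3 * N * 2 / L * ‖h‖ := by
      have e3 : S / t ≤ 3 * 2 / L := by
        rw [div_le_div_iff₀ (by linarith) hL0]
        nlinarith
      calc K * a * Real.exp (4 * Real.pi * C * a) / t * ‖R 0 h‖
          = K * (a * Real.exp (4 * Real.pi * C * a)) / t * ‖R 0 h‖ := by ring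
        _ ≤ K * (Real.exp q * S) / t * (N * ‖h‖) := by gcongr
        _ = K * Real.exp q * N * ‖h‖ * (S / t) := by ring
        _ ≤ K * Real.exp q * N * ‖h‖ * (3 * 2 / L) := by gcongr
        _ = _ := by ring
    have p1 : 0 ≤ M * N * 2 / L * ‖h‖ := by positivity
    linarith

/-- Since `T` commutes with `R 0`, splitting the time in halves gives
`T(t) R₀^{k+1} = (T(t/2) R₀) (T(t/2) R₀^k)`, and `log (2 + t) ≤ 2 log (2 + t/2)`. -/
lemma exists_log_decay_pow [CompleteSpace H] (hT : IsBddSemigroup T M)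
    (hR : IsResolventFamily T R) {B C : ℝ} (hC : 0 < C) (hB : 1 ≤ B)
    (hbd : ∀ μ, ‖R μ‖ ≤ B * Real.exp (C * |μ|)) (k : ℕ) :
    ∃ K, 0 ≤ K ∧ ∀ (t : ℝ) (h : H), 0 ≤ t →
      ‖T t ((R 0 ^ k) h)‖ ≤ K / Real.log (2 + t) ^ k * ‖h‖ := by
  obtain ⟨K₁, hK₁, h₁⟩ := hR.exists_log_decay hT hC hB hbd
  induction k with
  | zero => exact ⟨M, hT.nonneg, fun t h ht => by simpa using hT.norm_apply_le ht h⟩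
  | succ k ih =>
    obtain ⟨K, hK, hk⟩ := ih
    refine ⟨K₁ * K * 2 ^ (k + 1), by positivity, fun t h ht => ?_⟩
    have ht2 : 0 ≤ t / 2 := by positivity
    set l := Real.log (2 + t / 2) with hl
    have hl0 : 0 < l := Real.log_pos (by linarith)
    have hL0 : 0 < Real.log (2 + t) := Real.log_pos (by linarith)
    have hLl : Real.log (2 + t) ≤ 2 * l := by
      calc Real.log (2 + t) ≤ Real.log ((2 + t / 2) ^ 2) :=
            Real.log_le_log (by linarith) (by nlinarith)
        _ = 2 * l := by rw [Real.log_pow]; simp [hl]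
    have e : T t ((R 0 ^ (k + 1)) h) = T (t / 2) (R 0 (T (t / 2) ((R 0 ^ k) h))) := by
      rw [← hR.commute hT ht2, pow_succ']
      have := hT.add (t / 2) (t / 2) ht2 ht2
      rw [add_halves] at this
      rw [this]; rfl
    rw [e]
    calc _ ≤ K₁ / l * (K / l ^ k * ‖h‖) :=
          (h₁ _ _ ht2).trans (by gcongr; exact hk _ _ ht2)
      _ = K₁ * K * ‖h‖ * (1 / l) ^ (k + 1) := by rw [div_pow, one_pow, pow_succ]; field_simp
      _ ≤ K₁ * K * ‖h‖ * (2 / Real.log (2 + t)) ^ (k + 1) := by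
          refine mul_le_mul_of_nonneg_left (pow_le_pow_left₀ (by positivity) ?_ _) (by positivity)
          rw [div_le_div_iff₀ hl0 hL0]; linarith
      _ = _ := by rw [div_pow]; ring

end IsResolventFamily
end BurqDecay

/-- Burq: let `A` generate a bounded strongly continuous
semigroup `(T t)_{t ≥ 0}` on a Hilbert space `H`, suppose every `iμ` (`μ ∈ ℝ`)
is in the resolvent set of `A`, with resolvents `R μ = (A − iμ)⁻¹` satisfying
`‖R μ‖ ≤ C e^{C|μ|}` for `|μ|` large.  Then for every `k` there is `C_k > 0`
such that for all initial data `u₀ = u 0` in `D(Aᵏ)` (encoded by a chain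
`A (u j) = u (j+1)`, `j < k`) and all `t > 0`,
`‖T t u₀‖² ≤ C_k (log(2+t))^{−2k} ‖u₀‖²_{D(Aᵏ)}` where
`‖u₀‖²_{D(Aᵏ)} = Σ_{j ≤ k} ‖Aʲ u₀‖²`. -/
theorem stmt11 {H : Type*} [NormedAddCommGroup H] [InnerProductSpace ℂ H] [CompleteSpace H]
    (D : Submodule ℂ H) (A : D →ₗ[ℂ] H)
    (T : ℝ → H →L[ℂ] H)
    (hT0 : T 0 = 1)
    (hsemi : ∀ s t : ℝ, 0 ≤ s → 0 ≤ t → T (s + t) = (T s).comp (T t))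
    (hbdd : ∃ M : ℝ, ∀ t : ℝ, 0 ≤ t → ‖T t‖ ≤ M)
    (hcont : ∀ x : H, ContinuousOn (fun t => T t x) (Set.Ici 0))
    (hgen : ∀ u : D, HasDerivWithinAt (fun t => T t (u : H)) (A u) (Set.Ici 0) 0)
    (R : ℝ → H →L[ℂ] H)
    (hRleft : ∀ μ : ℝ, ∀ v : D, R μ (A v - ((μ : ℂ) * Complex.I) • (v : H)) = v)
    (hRright : ∀ μ : ℝ, ∀ h : H, ∃ hm : R μ h ∈ D,
      A ⟨R μ h, hm⟩ - ((μ : ℂ) * Complex.I) • (R μ h) = h)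
    (C μ₀ : ℝ) (hC : 0 < C)
    (hres : ∀ μ : ℝ, μ₀ ≤ |μ| → ‖R μ‖ ≤ C * Real.exp (C * |μ|)) :
    ∀ k : ℕ, ∃ Ck > (0 : ℝ), ∀ u : ℕ → D,
      (∀ j : ℕ, j < k → A (u j) = (u (j + 1) : H)) →
      ∀ t : ℝ, 0 < t →
        ‖T t ((u 0 : H))‖ ^ 2
          ≤ Ck / (Real.log (2 + t)) ^ (2 * k)
              * ∑ j ∈ Finset.range (k + 1), ‖(u j : H)‖ ^ 2 := by
  obtain ⟨M, hM⟩ := hbdd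
  have hSG : BurqDecay.IsBddSemigroup T M := ⟨hT0, hsemi, hM, hcont⟩
  have hRF : BurqDecay.IsResolventFamily T R := by
    refine ⟨fun μ x => ?_, fun μ ν => ?_⟩
    · obtain ⟨hm, hA⟩ := hRright μ x
      have := hgen ⟨R μ x, hm⟩
      rwa [sub_eq_iff_eq_add.1 hA] at this
    · ext x
      obtain ⟨hm, hA⟩ := hRright ν x
      -- Apply `R μ` to `(A - iμ) R ν x = x - i(μ - ν) R ν x`.
      have h1 := hRleft μ ⟨R ν x, hm⟩
      have h2 : A ⟨R ν x, hm⟩ - ((μ : ℂ) * Complex.I) • R ν x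
          = x - (((μ - ν : ℝ) : ℂ) * Complex.I) • R ν x := by
        rw [sub_eq_iff_eq_add.1 hA]
        push_cast
        rw [sub_mul, sub_smul]
        abel
      simp only [h2, map_sub, map_smul] at h1
      simp only [sub_apply, smul_apply,
        ContinuousLinearMap.comp_apply]
      nth_rewrite 1 [← h1]
      abel
  obtain ⟨B, hB, hbd⟩ : ∃ B, 1 ≤ B ∧ ∀ μ, ‖R μ‖ ≤ B * Real.exp (C * |μ|) := by
    obtain ⟨B₀, hB₀⟩ := (isCompact_Icc (a := -μ₀) (b := μ₀)).exists_bound_of_continuousOn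
      hRF.continuous.continuousOn
    refine ⟨max 1 (max C B₀), le_max_left _ _, fun μ => ?_⟩
    rcases le_total μ₀ |μ| with h | h
    · exact (hres μ h).trans (by gcongr; simp)
    · refine (hB₀ μ (abs_le.1 h)).trans ?_
      refine (le_max_of_le_right (le_max_right _ _) : B₀ ≤ max 1 (max C B₀)).trans ?_
      exact le_mul_of_one_le_right (by positivity) (Real.one_le_exp (by positivity))
  intro k
  obtain ⟨K, hK, hk⟩ := hRF.exists_log_decay_pow hSG hC hB hbd k
  refine ⟨K ^ 2 + 1, by positivity, fun u hu t ht => ?_⟩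
  have hu0 : ∀ j ≤ k, (u 0 : H) = (R 0 ^ j) (u j : H) := by
    intro j
    induction j with
    | zero => intro _; simp
    | succ j ih =>
      intro hj
      have h1 := hRleft 0 (u j)
      rw [hu j hj] at h1
      simp only [Complex.ofReal_zero, zero_mul, zero_smul, sub_zero] at h1
      rw [ih (by omega), pow_succ, mul_apply_eq_comp, h1]
  have hL0 : 0 < Real.log (2 + t) := Real.log_pos (by linarith)
  have hsum : ‖(u k : H)‖ ^ 2 ≤ ∑ j ∈ Finset.range (k + 1), ‖(u j : H)‖ ^ 2 :=
    Finset.single_le_sum (f := fun j => ‖(u j : H)‖ ^ 2) (fun j _ => by positivity)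
      (Finset.self_mem_range_succ k)
  calc ‖T t (u 0 : H)‖ ^ 2 ≤ (K / Real.log (2 + t) ^ k * ‖(u k : H)‖) ^ 2 := by
        rw [hu0 k le_rfl]
        gcongr
        exact hk t _ ht.le
    _ = K ^ 2 / Real.log (2 + t) ^ (2 * k) * ‖(u k : H)‖ ^ 2 := by
        rw [mul_pow, div_pow, ← pow_mul, mul_comm k 2]
    _ ≤ _ := by
        gcongr
        linarith
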